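/- Let b be a connected, canonically compactifiable graph over a finite discrete measure space (X,m), and let h ∈ ℓ²(X,m) with h̄ < 0. Then there exists c₋ < 0 such that for every c with c₋ < c < 0 there exists an upper solution u₁ ∈ D(L) for the equation Lu = h e^u − c. If moreover h ≤ 0 pointwise, then for every c < 0 there exists an upper solution u₁ ∈ D(L). -/

import Mathlib

open scoped BigOperators

/-- `u` is square-summable with respect to the measure `m`, i.e. `u ∈ ℓ²(X,m)`. -/
def MemL2 {X : Type*} (m : X → ℝ) (u : X → ℝ) : Prop :=
  Summable (fun x => u x ^ 2 * m x)

/-- `u` has finite energy: the sum defining `Q̃(u)` converges. -/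
def FinEnergy {X : Type*} (b : X → X → ℝ) (u : X → ℝ) : Prop :=
  Summable (fun p : X × X => b p.1 p.2 * (u p.1 - u p.2) ^ 2)

/-- The energy `Q(u) = (1/2) Σ_{x,y} b(x,y) (u(x) - u(y))²`. -/
noncomputable def energy {X : Type*} (b : X → X → ℝ) (u : X → ℝ) : ℝ :=
  (1 / 2) * ∑' p : X × X, b p.1 p.2 * (u p.1 - u p.2) ^ 2

/-- The bilinear energy form `Q(u,v) = (1/2) Σ_{x,y} b(x,y)(u(x)-u(y))(v(x)-v(y))`. -/
noncomputable def energyBil {X : Type*} (b : X → X → ℝ) (u v : X → ℝ) : ℝ :=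
  (1 / 2) * ∑' p : X × X, b p.1 p.2 * (u p.1 - u p.2) * (v p.1 - v p.2)

/-- The form domain `D(Q) = ℓ²(X,m) ∩ D̃`. -/
def MemDQ {X : Type*} (b : X → X → ℝ) (m : X → ℝ) (u : X → ℝ) : Prop :=
  MemL2 m u ∧ FinEnergy b u

/-- The form norm `‖u‖_Q = (Q(u) + ‖u‖₂²)^{1/2}`. -/
noncomputable def formNorm {X : Type*} (b : X → X → ℝ) (m : X → ℝ) (u : X → ℝ) : ℝ :=
  Real.sqrt (energy b u + ∑' x, u x ^ 2 * m x)

/-- `b` is a graph over `X`: symmetric, nonnegative, zero on the diagonal,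
with summable rows. -/
structure IsGraph {X : Type*} (b : X → X → ℝ) : Prop where
  symm : ∀ x y, b x y = b y x
  nonneg : ∀ x y, 0 ≤ b x y
  diag : ∀ x, b x x = 0
  row_summable : ∀ x, Summable (fun y => b x y)

/-- The graph `b` is connected: any two points are joined by a path of edges of
positive weight. -/
def GraphConnected {X : Type*} (b : X → X → ℝ) : Prop :=
  ∀ x y : X, Relation.ReflTransGen (fun a c => 0 < b a c) x y

/-- `(X,m)` is a finite discrete measure space: `m > 0` everywhere and `m(X) < ∞`. -/
structure FinMeasure {X : Type*} (m : X → ℝ) : Prop where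
  pos : ∀ x, 0 < m x
  summable : Summable m

/-- The graph `b` over `(X,m)` is canonically compactifiable: every function in
`D(Q)` is bounded. -/
def CanCompact {X : Type*} (b : X → X → ℝ) (m : X → ℝ) : Prop :=
  ∀ u : X → ℝ, MemDQ b m u → ∃ M : ℝ, ∀ x, |u x| ≤ M

/-- `u ∈ D(L)` with `L u = f` for the Neumann Laplacian `L`:
`u ∈ D(Q)`, `f ∈ ℓ²(X,m)` and `Q(u,v) = ⟨f,v⟩` for all `v ∈ D(Q)`. -/
def IsLap {X : Type*} (b : X → X → ℝ) (m : X → ℝ) (u f : X → ℝ) : Prop :=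
  MemDQ b m u ∧ MemL2 m f ∧
    ∀ v : X → ℝ, MemDQ b m v → energyBil b u v = ∑' x, f x * v x * m x

/-- The mean `ū = ⟨u,1⟩ / m(X)`. -/
noncomputable def mean {X : Type*} (m : X → ℝ) (u : X → ℝ) : ℝ :=
  (∑' x, u x * m x) / (∑' x, m x)

/-!
`D(Q)` is a Hilbert space, being a closed subspace of `ℓ²(X) × ℓ²(X × X)`. On a canonically
compactifiable graph every element of `D(Q)` is bounded, so by Banach–Steinhaus the sup-norm is
controlled by the form norm. Together with connectedness and `m(X) < ∞` this makes
`Q(u,v) + u(o) v(o)` coercive on `D(Q)`, and Lax–Milgram solves `Lv = f` for every `f ∈ ℓ²(X,m)`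
of mean zero.

If `Lv = g - ḡ` and `h e^{av} ≤ g` for some `a > 0`, then `u = av + log a` satisfies
`Lu = ag - aḡ ≥ h e^u - aḡ`, so `u` is an upper solution as soon as `c ≥ aḡ`. For `h ≤ 0` take
`g = h`, add a constant to make `v` nonnegative, and choose `a = c / h̄`. In general take
`g = h + ε |h|` with `ε` so small that `ḡ < 0`, and `a` so small that `|e^{av} - 1| ≤ ε`.
-/

section MemL2

variable {X : Type*} {m u v : X → ℝ}

lemma MemL2.summable_mul (hm : ∀ x, 0 ≤ m x) (hu : MemL2 m u) (hv : MemL2 m v) :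
    Summable fun x => u x * v x * m x := by
  refine .of_norm_bounded (Summable.add hu hv) fun x => ?_
  have h_young : |u x * v x| ≤ u x ^ 2 + v x ^ 2 :=
    abs_le.mpr ⟨by nlinarith [sq_nonneg (u x + v x)], by nlinarith [sq_nonneg (u x - v x)]⟩
  calc ‖u x * v x * m x‖ = |u x * v x| * m x := by
        rw [Real.norm_eq_abs, abs_mul, abs_of_nonneg (hm x)]
    _ ≤ u x ^ 2 * m x + v x ^ 2 * m x := by
        rw [← add_mul]
        exact mul_le_mul_of_nonneg_right h_young (hm x)

lemma MemL2.add (hm : ∀ x, 0 ≤ m x) (hu : MemL2 m u) (hv : MemL2 m v) :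
    MemL2 m fun x => u x + v x :=
  ((Summable.add hu hv).add ((hu.summable_mul hm hv).mul_left 2)).congr fun x => by ring

lemma MemL2.const_mul (hu : MemL2 m u) (a : ℝ) : MemL2 m fun x => a * u x :=
  (Summable.mul_left (a ^ 2) hu).congr fun x => by ring

lemma MemL2.abs (hu : MemL2 m u) : MemL2 m fun x => |u x| :=
  Summable.congr hu fun x => by rw [sq_abs]

lemma memL2_const (hm : Summable m) (t : ℝ) : MemL2 m fun _ => t :=
  hm.mul_left (t ^ 2)

lemma MemL2.summable (hm : FinMeasure m) (hu : MemL2 m u) : Summable fun x => u x * m x :=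
  (hu.summable_mul (fun x => (hm.pos x).le) (memL2_const hm.summable 1)).congr fun x => by ring

end MemL2

section mean

variable {X : Type*} {m : X → ℝ}

lemma mean_add_const_mul {u v : X → ℝ} (hu : Summable fun x => u x * m x)
    (hv : Summable fun x => v x * m x) (a : ℝ) :
    mean m (fun x => u x + a * v x) = mean m u + a * mean m v := by
  have h_tsum : ∑' x, (u x + a * v x) * m x = ∑' x, u x * m x + a * ∑' x, v x * m x := by
    rw [← tsum_mul_left, ← hu.tsum_add (hv.mul_left a)]
    exact tsum_congr fun x => by ring
  rw [mean, mean, mean, h_tsum]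
  ring

lemma tsum_sub_mean_mul [Nonempty X] (hm : FinMeasure m) {u : X → ℝ}
    (hu : Summable fun x => u x * m x) : ∑' x, (u x - mean m u) * m x = 0 := by
  have h_mass : 0 < ∑' x, m x :=
    hm.summable.tsum_pos (fun x => (hm.pos x).le) (Classical.arbitrary X) (hm.pos _)
  simp_rw [sub_mul]
  rw [hu.tsum_sub (hm.summable.mul_left _), tsum_mul_left, mean,
    div_mul_cancel₀ _ h_mass.ne', sub_self]

lemma nonempty_of_mean_ne_zero {u : X → ℝ} (hu : mean m u ≠ 0) : Nonempty X := by
  by_contra h_empty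
  rw [not_nonempty_iff] at h_empty
  exact hu (by simp [mean])

end mean

section energy

variable {X : Type*} {b : X → X → ℝ} {m : X → ℝ}

lemma FinEnergy.affine {u : X → ℝ} (hu : FinEnergy b u) (a t : ℝ) :
    FinEnergy b fun x => a * u x + t :=
  (Summable.mul_left (a ^ 2) hu).congr fun p => by ring

lemma energyBil_affine_left (u v : X → ℝ) (a t : ℝ) :
    energyBil b (fun x => a * u x + t) v = a * energyBil b u v := by
  rw [energyBil, energyBil, mul_left_comm, ← tsum_mul_left (a := a)]
  exact congrArg _ (tsum_congr fun p => by ring)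

lemma energyBil_self (u : X → ℝ) : energyBil b u u = energy b u := by
  rw [energyBil, energy]
  exact congrArg _ (tsum_congr fun p => by ring)

lemma energyBil_const_right (u : X → ℝ) (t : ℝ) : energyBil b u (fun _ => t) = 0 := by
  simp [energyBil]

lemma energy_nonneg (hb : ∀ x y, 0 ≤ b x y) (u : X → ℝ) : 0 ≤ energy b u :=
  mul_nonneg (by norm_num) (tsum_nonneg fun _ => mul_nonneg (hb _ _) (sq_nonneg _))

lemma FinEnergy.mul_sq_sub_le_energy (hb : ∀ x y, 0 ≤ b x y) {u : X → ℝ} (hu : FinEnergy b u)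
    (x y : X) :
    b x y * (u x - u y) ^ 2 ≤ 2 * energy b u := by
  rw [energy, ← mul_assoc, mul_one_div_cancel two_ne_zero, one_mul]
  exact hu.le_tsum (x, y) fun _ _ => mul_nonneg (hb _ _) (sq_nonneg _)

lemma memDQ_const (hm : Summable m) (t : ℝ) : MemDQ b m fun _ => t :=
  ⟨memL2_const hm t, by simp [FinEnergy, summable_zero]⟩

lemma IsLap.affine (hm : FinMeasure m) {v f : X → ℝ} (hv : IsLap b m v f) (a t : ℝ) :
    IsLap b m (fun x => a * v x + t) (fun x => a * f x) := by
  obtain ⟨⟨hv_l2, hv_energy⟩, hf, h_weak⟩ := hv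
  refine ⟨⟨(hv_l2.const_mul a).add (fun x => (hm.pos x).le) (memL2_const hm.summable t),
    hv_energy.affine a t⟩, hf.const_mul a, fun w hw => ?_⟩
  rw [energyBil_affine_left, h_weak w hw, ← tsum_mul_left]
  exact tsum_congr fun x => by ring

lemma GraphConnected.exists_sq_le_energy_add_sq (hb : ∀ x y, 0 ≤ b x y) (hconn : GraphConnected b)
    (o x : X) : ∃ C, ∀ u, FinEnergy b u → u x ^ 2 ≤ C * (energy b u + u o ^ 2) := by
  induction hconn o x with
  | refl =>
    exact ⟨1, fun u _ => by linarith [energy_nonneg hb u]⟩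
  | @tail y z _ hyz ih =>
    obtain ⟨C, hC⟩ := ih
    refine ⟨2 * C + 4 / b y z, fun u hu => ?_⟩
    have h_edge : (u y - u z) ^ 2 ≤ 2 * (energy b u + u o ^ 2) / b y z := by
      rw [le_div_iff₀ hyz]
      linarith [hu.mul_sq_sub_le_energy hb y z, sq_nonneg (u o)]
    calc u z ^ 2 ≤ 2 * u y ^ 2 + 2 * (u y - u z) ^ 2 := by
          linarith [sq_nonneg (2 * u y - u z)]
      _ ≤ 2 * (C * (energy b u + u o ^ 2)) + 2 * (2 * (energy b u + u o ^ 2) / b y z) := by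
          gcongr
          exact hC u hu
      _ = (2 * C + 4 / b y z) * (energy b u + u o ^ 2) := by ring

end energy

section weightedL2

variable {ι : Type*} {w : ι → ℝ}

lemma memℓp_two_sqrt_mul_iff (hw : ∀ i, 0 ≤ w i) {u : ι → ℝ} :
    Memℓp (fun i => √(w i) * u i) 2 ↔ Summable fun i => u i ^ 2 * w i := by
  rw [memℓp_gen_iff (by norm_num)]
  refine summable_congr fun i => ?_
  simp [mul_pow, Real.sq_sqrt (hw i), mul_comm]

lemma inner_eq_tsum_of_eq_sqrt_mul (hw : ∀ i, 0 ≤ w i) {F G : lp (fun _ : ι => ℝ) 2}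
    {u v : ι → ℝ} (hF : ∀ i, F i = √(w i) * u i) (hG : ∀ i, G i = √(w i) * v i) :
    inner ℝ F G = ∑' i, u i * v i * w i := by
  rw [lp.inner_eq_tsum]
  refine tsum_congr fun i => ?_
  rw [hF, hG, RCLike.inner_apply, conj_trivial]
  linear_combination u i * v i * Real.mul_self_sqrt (hw i)

end weightedL2

/-- The Hilbert space `ℓ²(X) × ℓ²(X × X)` containing `D(Q)` through
`u ↦ (√m u, √(b/2) (u(x) - u(y)))`; the weights are put into the functions, so that both factors
carry counting measure. -/
abbrev FormAmbient (X : Type*) : Type _ :=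
  WithLp 2 (lp (fun _ : X => ℝ) 2 × lp (fun _ : X × X => ℝ) 2)

/-- Evaluation at `x` of the function represented by an element of `FormAmbient X`. -/
noncomputable def pointEval {X : Type*} (m : X → ℝ) (x : X) : FormAmbient X →L[ℝ] ℝ :=
  (√(m x))⁻¹ • (lp.evalCLM ℝ (fun _ : X => ℝ) 2 x ∘L WithLp.fstL 2 ℝ _ _)

/-- The form domain `D(Q)` as a subspace of `FormAmbient X`: the second component is the weighted
difference of the function represented by the first one. The norm it inherits is `formNorm`. -/
noncomputable def formSpace {X : Type*} (b : X → X → ℝ) (m : X → ℝ) :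
    Submodule ℝ (FormAmbient X) :=
  ⨅ p : X × X, (lp.evalCLM ℝ (fun _ : X × X => ℝ) 2 p ∘L WithLp.sndL 2 ℝ _ _ -
    √(b p.1 p.2 / 2) • (pointEval m p.1 - pointEval m p.2)).ker

section formSpace

variable {X : Type*} {b : X → X → ℝ} {m : X → ℝ}

lemma pointEval_apply (x : X) (F : FormAmbient X) : pointEval m x F = (√(m x))⁻¹ * F.fst x :=
  rfl

lemma fst_apply_eq (hm : ∀ x, 0 < m x) (F : FormAmbient X) (x : X) :
    F.fst x = √(m x) * pointEval m x F := by
  rw [pointEval_apply, mul_inv_cancel_left₀ (Real.sqrt_pos.mpr (hm x)).ne']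

lemma mem_formSpace_iff {F : FormAmbient X} : F ∈ formSpace b m ↔
    ∀ p : X × X, F.snd p = √(b p.1 p.2 / 2) * (pointEval m p.1 F - pointEval m p.2 F) := by
  rw [formSpace, Submodule.mem_iInf]
  exact forall_congr' fun p => sub_eq_zero

instance completeSpace_formSpace : CompleteSpace (formSpace b m) := by
  have h_closed : IsClosed (formSpace b m : Set (FormAmbient X)) := by
    rw [formSpace, Submodule.coe_iInf]
    exact isClosed_iInter fun _ => ContinuousLinearMap.isClosed_ker _
  exact h_closed.completeSpace_coe

lemma summable_half_iff_finEnergy {u : X → ℝ} :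
    (Summable fun p : X × X => (u p.1 - u p.2) ^ 2 * (b p.1 p.2 / 2)) ↔ FinEnergy b u :=
  (summable_congr fun p => by ring).trans (summable_mul_left_iff (one_half_pos (α := ℝ)).ne')

lemma memDQ_pointEval (hb : ∀ x y, 0 ≤ b x y) (hm : ∀ x, 0 < m x) (F : formSpace b m) :
    MemDQ b m (pointEval m · (F : FormAmbient X)) := by
  constructor
  · refine (memℓp_two_sqrt_mul_iff fun x => (hm x).le).mp ?_
    simpa only [← fst_apply_eq hm] using lp.memℓp (F : FormAmbient X).fst
  · refine summable_half_iff_finEnergy.mp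
      ((memℓp_two_sqrt_mul_iff fun p => div_nonneg (hb _ _) zero_le_two).mp ?_)
    simpa only [← mem_formSpace_iff.mp F.2] using lp.memℓp (F : FormAmbient X).snd

lemma MemDQ.exists_pointEval_eq (hb : ∀ x y, 0 ≤ b x y) (hm : ∀ x, 0 < m x) {u : X → ℝ}
    (hu : MemDQ b m u) :
    ∃ F : formSpace b m, (pointEval m · (F : FormAmbient X)) = u := by
  let F : FormAmbient X := WithLp.toLp 2
    (⟨fun x => √(m x) * u x, (memℓp_two_sqrt_mul_iff fun x => (hm x).le).mpr hu.1⟩,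
     ⟨fun p : X × X => √(b p.1 p.2 / 2) * (u p.1 - u p.2),
      (memℓp_two_sqrt_mul_iff fun p => div_nonneg (hb _ _) zero_le_two).mpr
        (summable_half_iff_finEnergy.mpr hu.2)⟩)
  have hF (x : X) : pointEval m x F = u x :=
    inv_mul_cancel_left₀ (Real.sqrt_pos.mpr (hm x)).ne' (u x)
  exact ⟨⟨F, mem_formSpace_iff.mpr fun p => by rw [hF, hF]; rfl⟩, funext hF⟩

lemma inner_fst_eq_tsum (hm : ∀ x, 0 < m x) (F G : FormAmbient X) :
    inner ℝ F.fst G.fst = ∑' x, pointEval m x F * pointEval m x G * m x :=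
  inner_eq_tsum_of_eq_sqrt_mul (fun x => (hm x).le) (fst_apply_eq hm F) (fst_apply_eq hm G)

lemma inner_snd_eq_energyBil (hb : ∀ x y, 0 ≤ b x y) (F G : formSpace b m) :
    inner ℝ (F : FormAmbient X).snd (G : FormAmbient X).snd =
      energyBil b (pointEval m · (F : FormAmbient X))
        (pointEval m · (G : FormAmbient X)) := by
  rw [inner_eq_tsum_of_eq_sqrt_mul (fun p => div_nonneg (hb _ _) zero_le_two)
    (mem_formSpace_iff.mp F.2) (mem_formSpace_iff.mp G.2), energyBil, ← tsum_mul_left]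
  exact tsum_congr fun p => by ring

lemma norm_sq_formSpace (hb : ∀ x y, 0 ≤ b x y) (hm : ∀ x, 0 < m x) (F : formSpace b m) :
    ‖F‖ ^ 2 = energy b (pointEval m · (F : FormAmbient X)) +
      ∑' x, pointEval m x (F : FormAmbient X) ^ 2 * m x := by
  rw [Submodule.coe_norm, WithLp.prod_norm_sq_eq_of_L2, ← real_inner_self_eq_norm_sq,
    ← real_inner_self_eq_norm_sq, inner_fst_eq_tsum hm, inner_snd_eq_energyBil hb,
    energyBil_self, add_comm]
  simp_rw [sq]

end formSpace

section coercivity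

variable {X : Type*} {b : X → X → ℝ} {m : X → ℝ}

lemma CanCompact.exists_sq_le (hb : ∀ x y, 0 ≤ b x y) (hm : ∀ x, 0 < m x) (hcc : CanCompact b m) :
    ∃ C, 0 ≤ C ∧ ∀ u, MemDQ b m u → ∀ x, u x ^ 2 ≤ C * (energy b u + ∑' y, u y ^ 2 * m y) := by
  obtain ⟨C, hC⟩ := banach_steinhaus
    (g := fun x => pointEval m x ∘L (formSpace b m).subtypeL)
    fun F => hcc _ (memDQ_pointEval hb hm F)
  refine ⟨C ^ 2, sq_nonneg C, fun u hu x => ?_⟩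
  obtain ⟨F, rfl⟩ := hu.exists_pointEval_eq hb hm
  rw [← norm_sq_formSpace hb hm, ← mul_pow, sq_le_sq]
  exact ((pointEval m x ∘L (formSpace b m).subtypeL).le_of_opNorm_le (hC x) F).trans (le_abs_self _)

/-- On a finite set `s` values are controlled along paths; off `s` the mass
is so small that the sup-norm bound lets the `ℓ²`-norm be absorbed. -/
lemma CanCompact.exists_tsum_sq_le (hb : ∀ x y, 0 ≤ b x y) (hconn : GraphConnected b)
    (hm : FinMeasure m) (hcc : CanCompact b m) (o : X) :
    ∃ C, ∀ u, MemDQ b m u → ∑' x, u x ^ 2 * m x ≤ C * (energy b u + u o ^ 2) := by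
  obtain ⟨S, hS, h_sup⟩ := hcc.exists_sq_le hb hm.pos
  choose P hP using hconn.exists_sq_le_energy_add_sq hb o
  obtain ⟨δ, hδ, hSδ⟩ := exists_pos_mul_lt (one_half_pos (α := ℝ)) S
  obtain ⟨s, hs⟩ : ∃ s : Finset X, ∑' x : {x // x ∉ s}, m x < δ :=
    ((tendsto_order.mp (tendsto_tsum_compl_atTop_zero m)).2 δ hδ).exists
  refine ⟨2 * ∑ x ∈ s, P x * m x + 1, fun u hu => ?_⟩
  set E := energy b u + u o ^ 2
  set N := ∑' x, u x ^ 2 * m x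
  have hN : 0 ≤ N := tsum_nonneg fun x => mul_nonneg (sq_nonneg _) (hm.pos x).le
  have h_energy : 0 ≤ energy b u := energy_nonneg hb u
  have h_finite : ∑ x ∈ s, u x ^ 2 * m x ≤ (∑ x ∈ s, P x * m x) * E := by
    rw [Finset.sum_mul]
    refine Finset.sum_le_sum fun x _ => ?_
    rw [mul_right_comm]
    exact mul_le_mul_of_nonneg_right (hP x u hu.2) (hm.pos x).le
  have h_tail : ∑' x : {x // x ∉ s}, u x ^ 2 * m x ≤ (energy b u + N) / 2 :=
    calc ∑' x : {x // x ∉ s}, u x ^ 2 * m x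
        ≤ ∑' x : {x // x ∉ s}, S * (energy b u + N) * m x :=
          Summable.tsum_le_tsum
            (fun x => mul_le_mul_of_nonneg_right (h_sup u hu x) (hm.pos x).le)
            (hu.1.subtype _) ((hm.summable.subtype _).mul_left _)
      _ = S * (energy b u + N) * ∑' x : {x // x ∉ s}, m x := tsum_mul_left
      _ ≤ S * (energy b u + N) * δ := by gcongr
      _ = S * δ * (energy b u + N) := by ring
      _ ≤ 1 / 2 * (energy b u + N) := by gcongr
      _ = (energy b u + N) / 2 := by ring
  have h_split : ∑ x ∈ s, u x ^ 2 * m x + ∑' x : {x // x ∉ s}, u x ^ 2 * m x = N :=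
    Summable.sum_add_tsum_subtype_compl hu.1 s
  linarith [sq_nonneg (u o)]

end coercivity

section LaxMilgram

lemma exists_forall_apply_eq_of_isCoercive {V : Type*} [NormedAddCommGroup V]
    [InnerProductSpace ℝ V] [CompleteSpace V] {B : V →L[ℝ] V →L[ℝ] ℝ} (hB : IsCoercive B)
    (φ : V →L[ℝ] ℝ) : ∃ v, ∀ w, B v w = φ w := by
  refine ⟨hB.continuousLinearEquivOfBilin.symm ((InnerProductSpace.toDual ℝ V).symm φ),
    fun w => ?_⟩
  rw [← hB.continuousLinearEquivOfBilin_apply, ContinuousLinearEquiv.apply_symm_apply,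
    InnerProductSpace.toDual_symm_apply]

variable {X : Type*} {b : X → X → ℝ} {m : X → ℝ}

/-- The form `Q(u,v) + u(o) v(o)` on `D(Q)`. Unlike `Q`, which vanishes on constants, it is
coercive on a connected canonically compactifiable graph. -/
noncomputable def pinnedForm (b : X → X → ℝ) (m : X → ℝ) (o : X) :
    formSpace b m →L[ℝ] formSpace b m →L[ℝ] ℝ :=
  (innerSL ℝ).bilinearComp (WithLp.sndL 2 ℝ _ _ ∘L (formSpace b m).subtypeL)
      (WithLp.sndL 2 ℝ _ _ ∘L (formSpace b m).subtypeL) +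
    (innerSL ℝ).bilinearComp (pointEval m o ∘L (formSpace b m).subtypeL)
      (pointEval m o ∘L (formSpace b m).subtypeL)

lemma pinnedForm_apply (hb : ∀ x y, 0 ≤ b x y) (o : X) (F G : formSpace b m) :
    pinnedForm b m o F G =
      energyBil b (pointEval m · (F : FormAmbient X))
        (pointEval m · (G : FormAmbient X)) +
      pointEval m o (F : FormAmbient X) * pointEval m o (G : FormAmbient X) := by
  rw [← inner_snd_eq_energyBil hb, mul_comm]
  rfl

lemma isCoercive_pinnedForm (hb : ∀ x y, 0 ≤ b x y) (hconn : GraphConnected b) (hm : FinMeasure m)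
    (hcc : CanCompact b m) (o : X) : IsCoercive (pinnedForm b m o) := by
  obtain ⟨C, hC⟩ := hcc.exists_tsum_sq_le hb hconn hm o
  refine ⟨(1 + |C|)⁻¹, by positivity, fun F => ?_⟩
  set u := (pointEval m · (F : FormAmbient X))
  have h_nonneg : 0 ≤ energy b u + u o ^ 2 := add_nonneg (energy_nonneg hb u) (sq_nonneg _)
  have h_form : pinnedForm b m o F F = energy b u + u o ^ 2 := by
    rw [pinnedForm_apply hb, energyBil_self, sq]
  rw [mul_assoc, inv_mul_le_iff₀ (by positivity), ← sq, norm_sq_formSpace hb hm.pos, h_form]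
  calc energy b u + ∑' x, u x ^ 2 * m x
      ≤ (energy b u + u o ^ 2) + C * (energy b u + u o ^ 2) :=
        add_le_add (le_add_of_nonneg_right (sq_nonneg _)) (hC u (memDQ_pointEval hb hm.pos F))
    _ ≤ (1 + |C|) * (energy b u + u o ^ 2) := by
        rw [one_add_mul]
        gcongr
        exact le_abs_self C

lemma exists_energyBil_add_mul_eq_tsum (hb : ∀ x y, 0 ≤ b x y) (hconn : GraphConnected b)
    (hm : FinMeasure m) (hcc : CanCompact b m) (o : X) {f : X → ℝ} (hf : MemL2 m f) :
    ∃ v, MemDQ b m v ∧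
      ∀ w, MemDQ b m w → energyBil b v w + v o * w o = ∑' x, f x * w x * m x := by
  have hm_nonneg (x : X) : 0 ≤ m x := (hm.pos x).le
  let f' : lp (fun _ : X => ℝ) 2 :=
    ⟨fun x => √(m x) * f x, (memℓp_two_sqrt_mul_iff hm_nonneg).mpr hf⟩
  obtain ⟨F, hF⟩ := exists_forall_apply_eq_of_isCoercive
    (isCoercive_pinnedForm hb hconn hm hcc o)
    (innerSL ℝ f' ∘L WithLp.fstL 2 ℝ _ _ ∘L (formSpace b m).subtypeL)
  refine ⟨_, memDQ_pointEval hb hm.pos F, fun w hw => ?_⟩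
  obtain ⟨G, rfl⟩ := hw.exists_pointEval_eq hb hm.pos
  rw [← pinnedForm_apply hb, hF]
  exact inner_eq_tsum_of_eq_sqrt_mul hm_nonneg (fun _ => rfl) (fst_apply_eq hm.pos G)

lemma exists_isLap (hb : ∀ x y, 0 ≤ b x y) (hconn : GraphConnected b) (hm : FinMeasure m)
    (hcc : CanCompact b m) [Nonempty X] {f : X → ℝ} (hf : MemL2 m f)
    (hf_mean : ∑' x, f x * m x = 0) : ∃ v, IsLap b m v f := by
  let o := Classical.arbitrary X
  obtain ⟨v, hv, h_weak⟩ := exists_energyBil_add_mul_eq_tsum hb hconn hm hcc o hf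
  -- Testing with the constant `1` shows that the pinning term vanishes.
  have hvo : v o = 0 := by
    have h_one := h_weak _ (memDQ_const hm.summable 1)
    simpa only [energyBil_const_right, mul_one, zero_add, hf_mean] using h_one
  refine ⟨v, hv, hf, fun w hw => ?_⟩
  rw [← h_weak w hw, hvo, zero_mul, add_zero]

lemma exists_isLap_sub_mean (hb : ∀ x y, 0 ≤ b x y) (hconn : GraphConnected b) (hm : FinMeasure m)
    (hcc : CanCompact b m) [Nonempty X] {g : X → ℝ} (hg : MemL2 m g) :
    ∃ v, IsLap b m v fun x => g x - mean m g :=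
  exists_isLap hb hconn hm hcc
    (hg.add (fun x => (hm.pos x).le) (memL2_const hm.summable (-mean m g)))
    (tsum_sub_mean_mul hm (hg.summable hm))

end LaxMilgram

section upperSolution

variable {X : Type*} {b : X → X → ℝ} {m h : X → ℝ}

/-- `u` is an upper solution of `Lu = h eᵘ - c`; the function `f` is `Lu`. -/
def IsUpperSolution (b : X → X → ℝ) (m h : X → ℝ) (c : ℝ) (u : X → ℝ) : Prop :=
  ∃ f, IsLap b m u f ∧ ∀ x, h x * Real.exp (u x) - c ≤ f x

lemma IsLap.isUpperSolution_mul_add_log (hm : FinMeasure m) {v g : X → ℝ}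
    (hv : IsLap b m v fun x => g x - mean m g) {a : ℝ} (ha : 0 < a)
    (hg : ∀ x, h x * Real.exp (a * v x) ≤ g x) {c : ℝ} (hc : a * mean m g ≤ c) :
    IsUpperSolution b m h c fun x => a * v x + Real.log a := by
  refine ⟨_, hv.affine hm a (Real.log a), fun x => ?_⟩
  rw [Real.exp_add, Real.exp_log ha]
  linarith [mul_le_mul_of_nonneg_left (hg x) ha.le]

lemma exists_pos_abs_exp_mul_sub_one_le {ε : ℝ} (hε : 0 < ε) (M : ℝ) :
    ∃ a > 0, ∀ t, |t| ≤ M → |Real.exp (a * t) - 1| ≤ ε := by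
  obtain ⟨a, ha, haM⟩ := exists_pos_mul_lt (lt_min one_pos (half_pos hε)) M
  refine ⟨a, ha, fun t ht => ?_⟩
  have h_small : |a * t| ≤ min 1 (ε / 2) := by
    rw [abs_mul, abs_of_pos ha, mul_comm]
    exact (mul_le_mul_of_nonneg_right ht ha.le).trans haM.le
  calc |Real.exp (a * t) - 1| ≤ 2 * |a * t| :=
        Real.abs_exp_sub_one_le (h_small.trans (min_le_left _ _))
    _ ≤ 2 * (ε / 2) := by gcongr; exact h_small.trans (min_le_right _ _)
    _ = ε := by ring

/-- Since `h` need not be bounded, `h (e^{av} - 1)` is not uniformly small; it is absorbed by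
solving for `h + ε |h|` in place of `h`. -/
lemma exists_neg_forall_isUpperSolution (hb : ∀ x y, 0 ≤ b x y) (hconn : GraphConnected b)
    (hm : FinMeasure m) (hcc : CanCompact b m) (hh : MemL2 m h) (hmean : mean m h < 0) :
    ∃ c₀ < 0, ∀ c, c₀ ≤ c → ∃ u, IsUpperSolution b m h c u := by
  have : Nonempty X := nonempty_of_mean_ne_zero hmean.ne
  obtain ⟨ε, hε, h_small⟩ := exists_pos_mul_lt (neg_pos.mpr hmean) (mean m fun x => |h x|)
  have hg_mean : mean m (fun x => h x + ε * |h x|) < 0 := by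
    rw [mean_add_const_mul (hh.summable hm) (hh.abs.summable hm)]
    linarith
  obtain ⟨v, hv⟩ := exists_isLap_sub_mean hb hconn hm hcc
    (hh.add (fun x => (hm.pos x).le) (hh.abs.const_mul ε))
  obtain ⟨M, hM⟩ := hcc v hv.1
  obtain ⟨a, ha, h_exp⟩ := exists_pos_abs_exp_mul_sub_one_le hε M
  have hg (x : X) : h x * Real.exp (a * v x) ≤ h x + ε * |h x| :=
    calc h x * Real.exp (a * v x) = h x + h x * (Real.exp (a * v x) - 1) := by ring
      _ ≤ h x + |h x| * |Real.exp (a * v x) - 1| := by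
          rw [← abs_mul]
          gcongr
          exact le_abs_self _
      _ ≤ h x + ε * |h x| := by
          rw [mul_comm ε]
          gcongr
          exact h_exp _ (hM x)
  exact ⟨_, mul_neg_of_pos_of_neg ha hg_mean,
    fun c hc => ⟨_, hv.isUpperSolution_mul_add_log hm ha hg hc⟩⟩

lemma exists_isUpperSolution_of_nonpos (hb : ∀ x y, 0 ≤ b x y) (hconn : GraphConnected b)
    (hm : FinMeasure m) (hcc : CanCompact b m) (hh : MemL2 m h) (hmean : mean m h < 0)
    (h_nonpos : ∀ x, h x ≤ 0) (c : ℝ) (hc : c < 0) : ∃ u, IsUpperSolution b m h c u := by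
  have : Nonempty X := nonempty_of_mean_ne_zero hmean.ne
  obtain ⟨v, hv⟩ := exists_isLap_sub_mean hb hconn hm hcc hh
  obtain ⟨M, hM⟩ := hcc v hv.1
  have ha : 0 < c / mean m h := div_pos_of_neg_of_neg hc hmean
  have hvM : IsLap b m (fun x => v x + M) fun x => h x - mean m h := by
    simpa only [one_mul] using hv.affine hm 1 M
  refine ⟨_, hvM.isUpperSolution_mul_add_log hm ha (fun x => ?_)
    (div_mul_cancel₀ c hmean.ne).le⟩
  have h_one_le : 1 ≤ Real.exp (c / mean m h * (v x + M)) :=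
    Real.one_le_exp (mul_nonneg ha.le (by linarith [neg_le_of_abs_le (hM x)]))
  simpa only [mul_one] using mul_le_mul_of_nonpos_left h_one_le (h_nonpos x)

end upperSolution

theorem stmt15_general {X : Type*} {b : X → X → ℝ} {m h : X → ℝ} (hb : ∀ x y, 0 ≤ b x y)
    (hconn : GraphConnected b) (hm : FinMeasure m) (hcc : CanCompact b m) (hh : MemL2 m h)
    (hmean : mean m h < 0) :
    (∃ c₀ < (0 : ℝ), ∀ c, c₀ < c → c < 0 → ∃ u, IsUpperSolution b m h c u) ∧
      ((∀ x, h x ≤ 0) → ∀ c < 0, ∃ u, IsUpperSolution b m h c u) := by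
  refine ⟨?_, exists_isUpperSolution_of_nonpos hb hconn hm hcc hh hmean⟩
  obtain ⟨c₀, hc₀, h_upper⟩ := exists_neg_forall_isUpperSolution hb hconn hm hcc hh hmean
  exact ⟨c₀, hc₀, fun c hc _ => h_upper c hc.le⟩

/-- if `h̄ < 0`, there is `c₋ < 0` so that for all `c₋ < c < 0` an
upper solution of `Lu = h e^u - c` exists; if moreover `h ≤ 0`, an upper solution
exists for every `c < 0`. -/
theorem stmt15 {X : Type*} [Countable X] (b : X → X → ℝ) (m : X → ℝ)
    (hb : IsGraph b) (hconn : GraphConnected b) (hm : FinMeasure m)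
    (hcc : CanCompact b m) (h : X → ℝ) (hh2 : MemL2 m h) (hmean : mean m h < 0) :
    (∃ cm < (0 : ℝ), ∀ c : ℝ, cm < c → c < 0 →
      ∃ u₁ f₁ : X → ℝ, IsLap b m u₁ f₁ ∧
        ∀ x, h x * Real.exp (u₁ x) - c ≤ f₁ x) ∧
    ((∀ x, h x ≤ 0) → ∀ c : ℝ, c < 0 →
      ∃ u₁ f₁ : X → ℝ, IsLap b m u₁ f₁ ∧
        ∀ x, h x * Real.exp (u₁ x) - c ≤ f₁ x) :=
  stmt15_general hb.nonneg hconn hm hcc hh2 hmean
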